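/- (Blekherman–Sinn) The maximum likelihood threshold of the complete bipartite graph K_{5,5} (on 10 vertices) equals 4. -/

import Mathlib

open MeasureTheory Matrix

noncomputable section

/-- The objective function `K ↦ tr(S K) − log det K` of Gaussian maximum likelihood,
where `S` is the sample covariance matrix. -/
def mlObjective {n : ℕ} (S K : Matrix (Fin n) (Fin n) ℝ) : ℝ :=
  (S * K).trace - Real.log K.det

/-- The maximum likelihood threshold of a set `M` of positive definite matrices:
the smallest positive integer `d` such that for Lebesgue-almost every real `n × d`
matrix `X`, the function `K ↦ tr(X Xᵀ K) − log det K` attains a minimum on `M`. -/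
def mlt (n : ℕ) (M : Set (Matrix (Fin n) (Fin n) ℝ)) : ℕ :=
  sInf {d : ℕ | 0 < d ∧
    ∀ᵐ X : Fin n → Fin d → ℝ ∂volume,
      ∃ K ∈ M, ∀ K' ∈ M,
        mlObjective (Matrix.of X * (Matrix.of X)ᵀ) K ≤
          mlObjective (Matrix.of X * (Matrix.of X)ᵀ) K'}

/-- The Gaussian graphical model of a graph `G` on `{1,…,n}`: all symmetric positive
definite matrices whose off-diagonal entries vanish at non-edges of `G`. -/
def graphModel (n : ℕ) (G : SimpleGraph (Fin n)) : Set (Matrix (Fin n) (Fin n) ℝ) :=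
  {K | K.PosDef ∧ ∀ i j, i ≠ j → ¬ G.Adj i j → K i j = 0}

/-- The complete bipartite graph `K_{5,5}` on vertex set `Fin 10`, with parts
`{0,…,4}` and `{5,…,9}`. -/
def K55 : SimpleGraph (Fin 10) :=
  SimpleGraph.fromRel (fun i j => i.val < 5 ∧ 5 ≤ j.val)


open scoped MatrixOrder in
lemma psd_factor {n : ℕ} {A : Matrix (Fin n) (Fin n) ℝ} (hA : A.PosSemidef) :
    ∃ B : Matrix (Fin n) (Fin n) ℝ, A = Bᴴ * B :=
  CStarAlgebra.nonneg_iff_eq_star_mul_self.mp hA.nonneg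

lemma det_one_add_psd {n : ℕ} {N : Matrix (Fin n) (Fin n) ℝ} (hN : N.PosSemidef) (h0 : N ≠ 0) :
    1 < (1 + N).det := by
  have key : (1 + N).det = ∏ i, (1 + hN.1.eigenvalues i) := by
    conv_lhs => rw [hN.1.spectral_theorem]
    set U := hN.1.eigenvectorUnitary
    rw [← map_one (Unitary.conjStarAlgAut ℝ _ U), ← map_add, Unitary.conjStarAlgAut_apply,
      Matrix.det_mul_right_comm]
    simp only [Unitary.mul_star_self_of_mem U.2, one_mul]
    rw [← Matrix.diagonal_one, Matrix.diagonal_add, Matrix.det_diagonal]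
    simp
  rw [key]
  have hnn := hN.eigenvalues_nonneg
  have : ∃ i, hN.1.eigenvalues i ≠ 0 := by
    by_contra! h
    exact h0 (hN.1.eigenvalues_eq_zero_iff.1 (funext h))
  obtain ⟨i, hi⟩ := this
  have hi' : 0 < hN.1.eigenvalues i := lt_of_le_of_ne (hnn i) (Ne.symm hi)
  rw [← Finset.mul_prod_erase _ _ (Finset.mem_univ i)]
  have : 1 ≤ ∏ j ∈ Finset.univ.erase i, (1 + hN.1.eigenvalues j) := by
    refine (Finset.prod_const_one (s := Finset.univ.erase i)).symm.le.trans ?_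
    apply Finset.prod_le_prod
    · intro j _; exact zero_le_one
    · intro j _
      linarith [hnn j]
  nlinarith

lemma det_add_psd {n : ℕ} {K N : Matrix (Fin n) (Fin n) ℝ} (hK : K.PosDef) (hN : N.PosSemidef)
    (h0 : N ≠ 0) : K.det < (K + N).det := by
  obtain ⟨C, hC⟩ := psd_factor hK.inv.posSemidef
  have hKu : IsUnit K.det := hK.det_pos.ne'.isUnit
  have e1 : K + N = K * (1 + Cᴴ * (C * N)) := by
    rw [← Matrix.mul_assoc, ← hC, Matrix.mul_add, ← Matrix.mul_assoc, Matrix.mul_nonsing_inv _ hKu]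
    simp
  have hCu : IsUnit C := by
    have : (Cᴴ * C).det ≠ 0 := hC ▸ hK.inv.det_pos.ne'
    rw [Matrix.det_mul] at this
    exact (Matrix.isUnit_iff_isUnit_det _).2 (right_ne_zero_of_mul this).isUnit
  rw [e1, Matrix.det_mul, Matrix.det_one_add_mul_comm]
  have h1 : (C * N * Cᴴ).PosSemidef := hN.mul_mul_conjTranspose_same C
  have h2 : C * N * Cᴴ ≠ 0 := by
    intro h
    apply h0
    have hCs : IsUnit Cᴴ := hCu.star
    rw [← zero_mul Cᴴ] at h
    have := hCs.mul_right_cancel h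
    rw [← mul_zero C] at this
    exact hCu.mul_left_cancel this
  have := det_one_add_psd h1 h2
  nlinarith [hK.det_pos]

/-- no minimiser if there is a PSD element of the linear space killing the data -/
lemma no_min {n d : ℕ} (G : SimpleGraph (Fin n)) (X : Fin n → Fin d → ℝ)
    (N : Matrix (Fin n) (Fin n) ℝ) (hN : N.PosSemidef) (h0 : N ≠ 0)
    (hp : ∀ i j, i ≠ j → ¬ G.Adj i j → N i j = 0) (hX : N * Matrix.of X = 0) :
    ¬ ∃ K ∈ graphModel n G, ∀ K' ∈ graphModel n G,
        mlObjective (Matrix.of X * (Matrix.of X)ᵀ) K ≤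
          mlObjective (Matrix.of X * (Matrix.of X)ᵀ) K' := by
  rintro ⟨K, hK, hmin⟩
  have hm : K + N ∈ graphModel n G := by
    refine ⟨hK.1.add_posSemidef hN, fun i j hij hG => ?_⟩
    simp [hK.2 i j hij hG, hp i j hij hG]
  have := hmin _ hm
  have h1 := det_add_psd hK.1 hN h0
  have h2 := Real.log_lt_log hK.1.det_pos h1
  have h3 : (Matrix.of X * (Matrix.of X)ᵀ * N).trace = 0 := by
    rw [Matrix.trace_mul_comm, ← Matrix.mul_assoc, hX]; simp
  unfold mlObjective at this
  rw [Matrix.mul_add, Matrix.trace_add, h3] at this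
  linarith

lemma psd_entry {n : ℕ} {K : Matrix (Fin n) (Fin n) ℝ} (hK : K.PosSemidef) (i j : Fin n) :
    |K i j| ≤ K.trace := by
  have hd : ∀ i, K i i ≤ K.trace := fun i =>
    Finset.single_le_sum (f := fun i => K i i) (fun i _ => hK.diag_nonneg) (Finset.mem_univ i)
  have hs : K j i = K i j := by simpa using hK.1.apply i j
  have q : ∀ s : ℝ, 0 ≤ K i i + s * K i j + s * (K j i + s * K j j) := by
    intro s
    have := hK.dotProduct_mulVec_nonneg (Pi.single i 1 + s • Pi.single j 1)
    simp [Matrix.mulVec_add, Matrix.mulVec_smul, add_dotProduct, smul_dotProduct, dotProduct_add, hs] at this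
    rw [hs]; linarith
  have q1 := q 1
  have q2 := q (-1)
  rw [abs_le]
  constructor <;> linarith [hd i, hd j]

lemma psd_det_le {n : ℕ} {K : Matrix (Fin n) (Fin n) ℝ} (hK : K.PosSemidef) :
    K.det ≤ K.trace ^ n := by
  have h1 := hK.1.det_eq_prod_eigenvalues
  have h2 := hK.1.trace_eq_sum_eigenvalues
  simp only [RCLike.ofReal_real_eq_id, id] at h1 h2
  rw [h1, h2]
  calc _ ≤ ∏ _i : Fin n, ∑ i, hK.1.eigenvalues i := by
        apply Finset.prod_le_prod
        · intro i _; exact hK.eigenvalues_nonneg i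
        · intro i _
          exact Finset.single_le_sum (fun i _ => hK.eigenvalues_nonneg i) (Finset.mem_univ i)
    _ = _ := by simp

lemma psd_closed (n : ℕ) : IsClosed {K : Matrix (Fin n) (Fin n) ℝ | K.PosSemidef} := by
  have : {K : Matrix (Fin n) (Fin n) ℝ | K.PosSemidef} =
      {K | Kᴴ = K} ∩ ⋂ x : Fin n → ℝ, {K | 0 ≤ star x ⬝ᵥ (K *ᵥ x)} := by
    ext K
    simp only [Set.mem_ofPred_eq, Set.mem_inter_iff, Set.mem_iInter,
      Matrix.posSemidef_iff_dotProduct_mulVec, Matrix.IsHermitian]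
  rw [this]
  refine IsClosed.inter (isClosed_eq (by fun_prop) (by fun_prop)) (isClosed_iInter fun x => ?_)
  exact isClosed_le (by fun_prop) (by fun_prop)

lemma psd_compact {n : ℕ} (T : ℝ) (C : Set (Matrix (Fin n) (Fin n) ℝ)) (hC : IsClosed C)
    (hC' : ∀ K ∈ C, K.PosSemidef ∧ K.trace ≤ T) : IsCompact C := by
  have hc : IsCompact (Set.univ.pi fun _ : Fin n => Set.univ.pi fun _ : Fin n =>
      Set.Icc (-T) T) := isCompact_univ_pi fun _ => isCompact_univ_pi fun _ => isCompact_Icc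
  refine IsCompact.of_isClosed_subset hc hC ?_
  intro K hK i _ j _
  have := psd_entry (hC' K hK).1 i j
  exact abs_le.1 (this.trans (hC' K hK).2)

lemma pattern_closed (n : ℕ) (G : SimpleGraph (Fin n)) :
    IsClosed {K : Matrix (Fin n) (Fin n) ℝ | ∀ i j, i ≠ j → ¬ G.Adj i j → K i j = 0} := by
  simp only [Set.ofPred_forall]
  refine isClosed_iInter fun i => isClosed_iInter fun j => isClosed_iInter fun _ =>
    isClosed_iInter fun _ => isClosed_eq (by fun_prop) (by fun_prop)

lemma exists_min {n : ℕ} (hn : 0 < n) (G : SimpleGraph (Fin n)) (S : Matrix (Fin n) (Fin n) ℝ)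
    (hS : ∀ K : Matrix (Fin n) (Fin n) ℝ, K.PosSemidef → K ≠ 0 →
      (∀ i j, i ≠ j → ¬ G.Adj i j → K i j = 0) → 0 < (S * K).trace) :
    ∃ K ∈ graphModel n G, ∀ K' ∈ graphModel n G, mlObjective S K ≤ mlObjective S K' := by
  have : Nonempty (Fin n) := ⟨⟨0, hn⟩⟩
  -- step 1: uniform constant
  obtain ⟨c, hc, hcK⟩ : ∃ c : ℝ, 0 < c ∧ ∀ K ∈ graphModel n G, c * K.trace ≤ (S * K).trace := by
    let C : Set (Matrix (Fin n) (Fin n) ℝ) := {K | K.PosSemidef} ∩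
      {K | ∀ i j, i ≠ j → ¬ G.Adj i j → K i j = 0} ∩ {K | K.trace = 1}
    have hCc : IsCompact C := by
      refine psd_compact 1 C (((psd_closed n).inter (pattern_closed n G)).inter
        (isClosed_eq (by fun_prop) (by fun_prop))) ?_
      rintro K ⟨⟨h1, h2⟩, h3⟩
      exact ⟨h1, le_of_eq h3⟩
    have hnorm : ∀ K ∈ graphModel n G, (K.trace)⁻¹ • K ∈ C := by
      intro K hK
      have ht : 0 < K.trace := hK.1.trace_pos
      refine ⟨⟨hK.1.posSemidef.smul (inv_nonneg.2 ht.le), fun i j h1 h2 => ?_⟩, ?_⟩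
      · simp [hK.2 i j h1 h2]
      · simp [Matrix.trace_smul, ht.ne']
    have h1 : (1 : Matrix (Fin n) (Fin n) ℝ) ∈ graphModel n G :=
      ⟨Matrix.PosDef.one, fun i j h _ => Matrix.one_apply_ne h⟩
    obtain ⟨K0, hK0, hmin⟩ := hCc.exists_isMinOn ⟨_, hnorm _ h1⟩
      (f := fun K => (S * K).trace) (by fun_prop)
    refine ⟨(S * K0).trace, hS K0 hK0.1.1 ?_ hK0.1.2, fun K hK => ?_⟩
    · rintro rfl
      have := hK0.2
      simp at this
    · have ht : 0 < K.trace := hK.1.trace_pos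
      have := hmin (hnorm K hK)
      simp only [Set.mem_ofPred_eq, Matrix.mul_smul, Matrix.trace_smul, smul_eq_mul] at this
      rwa [← le_div_iff₀ ht, div_eq_inv_mul]
  have hone : (1 : Matrix (Fin n) (Fin n) ℝ) ∈ graphModel n G :=
    ⟨Matrix.PosDef.one, fun i j h _ => Matrix.one_apply_ne h⟩
  -- lower bound by trace
  obtain ⟨T, hT⟩ : ∃ T : ℝ, ∀ t : ℝ, 0 < t → c * t - n * Real.log t ≤ S.trace → t ≤ T := by
    have : Filter.Tendsto (fun t : ℝ => t * (c - n * (Real.log t / t))) Filter.atTop Filter.atTop := by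
      apply Filter.Tendsto.atTop_mul_pos hc Filter.tendsto_id
      have h : Filter.Tendsto (fun t : ℝ => Real.log t / t) Filter.atTop (nhds 0) := by
        simpa using Real.tendsto_pow_log_div_mul_add_atTop 1 0 1 one_ne_zero
      simpa using tendsto_const_nhds.sub (h.const_mul (n : ℝ)) (a := c)
    obtain ⟨T, hT⟩ := Filter.eventually_atTop.1 (this.eventually_gt_atTop S.trace)
    refine ⟨T, fun t ht h => ?_⟩
    by_contra! hlt
    have := hT t hlt.le
    have e : t * (c - n * (Real.log t / t)) = c * t - n * Real.log t := by
      field_simp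
    linarith
  have hlog : ∀ K ∈ graphModel n G, Real.log K.det ≤ n * Real.log K.trace := by
    intro K hK
    rw [← Real.log_pow]
    exact Real.log_le_log hK.1.det_pos (psd_det_le hK.1.posSemidef)
  let D : Set (Matrix (Fin n) (Fin n) ℝ) := {K | K.PosSemidef} ∩
      {K | ∀ i j, i ≠ j → ¬ G.Adj i j → K i j = 0} ∩ {K | K.trace ≤ T} ∩
      {K | Real.exp (-S.trace) ≤ K.det}
  have hDc : IsCompact D := by
    refine psd_compact T D ((((psd_closed n).inter (pattern_closed n G)).inter
        (isClosed_le (by fun_prop) (by fun_prop))).inter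
        (isClosed_le (by fun_prop) (by fun_prop))) ?_
    rintro K ⟨⟨⟨h1, h2⟩, h3⟩, h4⟩
    exact ⟨h1, h3⟩
  have hDpos : ∀ K ∈ D, 0 < K.det := fun K hK => (Real.exp_pos _).trans_le hK.2
  have hDM : ∀ K ∈ D, K ∈ graphModel n G := fun K hK =>
    ⟨hK.1.1.1.posDef_iff_isUnit.2 ((Matrix.isUnit_iff_isUnit_det _).2 (hDpos K hK).ne'.isUnit),
      hK.1.1.2⟩
  have hf1 : mlObjective S 1 = S.trace := by simp [mlObjective]
  have hsub : ∀ K ∈ graphModel n G, mlObjective S K ≤ S.trace → K ∈ D := by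
    intro K hK h
    have ht : 0 < K.trace := hK.1.trace_pos
    have a1 := hcK K hK
    have a2 := hlog K hK
    unfold mlObjective at h
    refine ⟨⟨⟨hK.1.posSemidef, hK.2⟩, hT _ ht (by linarith)⟩, ?_⟩
    show Real.exp (-S.trace) ≤ K.det
    rw [← Real.le_log_iff_exp_le hK.1.det_pos]
    nlinarith [mul_pos hc ht]
  have hcont : ContinuousOn (fun K => mlObjective S K) D := by
    unfold mlObjective
    refine ContinuousOn.sub (by fun_prop) (ContinuousOn.log (by fun_prop) ?_)
    intro K hK
    exact (hDpos K hK).ne'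
  obtain ⟨K, hK, hmin⟩ := hDc.exists_isMinOn ⟨1, hsub 1 hone hf1.le⟩ hcont
  refine ⟨K, hDM K hK, fun K' hK' => ?_⟩
  by_cases h : mlObjective S K' ≤ S.trace
  · exact hmin (hsub K' hK' h)
  · have := hmin (hsub 1 hone hf1.le)
    simp only [Set.mem_ofPred_eq] at this
    linarith

/-- signs of the two sides -/
def sg (i : Fin 10) : ℝ := if i.val < 5 then 1 else -1

lemma sg_sq (i : Fin 10) : sg i ≠ 0 := by unfold sg; split_ifs <;> norm_num

lemma diag_rel {d : ℕ} (X : Fin 10 → Fin d → ℝ) (K : Matrix (Fin 10) (Fin 10) ℝ)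
    (hK : K.PosSemidef) (hp : ∀ i j, i ≠ j → ¬ K55.Adj i j → K i j = 0)
    (hX : K * Matrix.of X = 0) (p q : Fin d) :
    ∑ i, (sg i * K i i) * (X i p * X i q) = 0 := by
  have hXe : ∀ i q, ∑ j, K i j * X j q = 0 := by
    intro i q
    have := congrFun (congrFun hX i) q
    simpa [Matrix.mul_apply] using this
  have hs : ∀ i j, K j i = K i j := fun i j => by simpa using hK.1.apply i j
  have e1 : ∑ i, ∑ j, sg i * K i j * (X i p * X j q) = 0 := by
    apply Finset.sum_eq_zero
    intro i _
    calc _ = sg i * X i p * ∑ j, K i j * X j q := by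
          rw [Finset.mul_sum]; exact Finset.sum_congr rfl fun j _ => by ring
      _ = 0 := by rw [hXe]; ring
  have e2 : ∑ i, ∑ j, sg j * K i j * (X i p * X j q) = 0 := by
    rw [Finset.sum_comm]
    apply Finset.sum_eq_zero
    intro j _
    calc _ = sg j * X j q * ∑ i, K j i * X i p := by
          rw [Finset.mul_sum]; exact Finset.sum_congr rfl fun i _ => by rw [hs i j]; ring
      _ = 0 := by rw [hXe]; ring
  have e3 : ∑ i, ∑ j, (sg i + sg j) * K i j * (X i p * X j q) = 0 := by
    rw [← add_zero (0:ℝ)]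
    nth_rewrite 1 [← e1]
    rw [← e2, ← Finset.sum_add_distrib]
    refine Finset.sum_congr rfl fun i _ => ?_
    rw [← Finset.sum_add_distrib]
    exact Finset.sum_congr rfl fun j _ => by ring
  have e4 : ∀ i, ∑ j, (sg i + sg j) * K i j * (X i p * X j q)
      = 2 * ((sg i * K i i) * (X i p * X i q)) := by
    intro i
    rw [Finset.sum_eq_single i]
    · ring
    · intro j _ hij
      by_cases h : K55.Adj i j
      · have : sg i + sg j = 0 := by
          simp only [K55, SimpleGraph.fromRel_adj] at h
          unfold sg
          rcases h.2 with h | h <;> split_ifs <;> first | omega | norm_num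
        rw [this]; ring
      · rw [hp i j (Ne.symm hij) h]; ring
    · simp
  simp only [e4, ← Finset.mul_sum] at e3
  linarith

/-- monomials in four variables -/
def m4 : Fin 10 → Fin 4 × Fin 4 :=
  ![(0,0),(1,1),(2,2),(3,3),(0,1),(0,2),(0,3),(1,2),(1,3),(2,3)]

def M4 (X : Fin 10 → Fin 4 → ℝ) : Matrix (Fin 10) (Fin 10) ℝ :=
  Matrix.of fun i k => X i (m4 k).1 * X i (m4 k).2

def V4 : Fin 10 → Fin 4 → ℝ :=
  ![![1,0,0,0],![0,1,0,0],![0,0,1,0],![0,0,0,1],![1,1,0,0],![1,0,1,0],![1,0,0,1],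
    ![0,1,1,0],![0,1,0,1],![0,0,1,1]]

lemma M4_V4 : (M4 V4).det ≠ 0 := by
  rw [Matrix.det_of_isLowerTriangular]
  · rw [Finset.prod_ne_zero_iff]
    intro i _
    fin_cases i <;> simp [M4, V4, m4]
  · intro i j hij
    fin_cases i <;> fin_cases j <;> first | (exfalso; revert hij; decide) | simp [M4, V4, m4]

lemma good4 (X : Fin 10 → Fin 4 → ℝ) (h : (M4 X).det ≠ 0) :
    ∃ K ∈ graphModel 10 K55, ∀ K' ∈ graphModel 10 K55,
        mlObjective (Matrix.of X * (Matrix.of X)ᵀ) K ≤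
          mlObjective (Matrix.of X * (Matrix.of X)ᵀ) K' := by
  apply exists_min (by norm_num)
  intro K hK h0 hp
  have e : (Matrix.of X * (Matrix.of X)ᵀ * K).trace = ((Matrix.of X)ᴴ * K * Matrix.of X).trace := by
    rw [Matrix.mul_assoc, Matrix.trace_mul_comm]
    rw [Matrix.conjTranspose_eq_transpose_of_trivial]
  have hps := hK.conjTranspose_mul_mul_same (Matrix.of X)
  rw [e]
  refine lt_of_le_of_ne hps.trace_nonneg fun h1 => h0 ?_
  have h2 := hps.trace_eq_zero_iff.1 h1.symm
  have hX : K * Matrix.of X = 0 := by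
    ext i p
    have h3 : star (fun i => X i p) ⬝ᵥ (K *ᵥ (fun i => X i p)) = 0 := by
      have := congrFun (congrFun h2 p) p
      rw [Matrix.mul_assoc] at this
      simpa [Matrix.mul_apply, dotProduct, Matrix.mulVec] using this
    have := congrFun ((hK.dotProduct_mulVec_zero_iff _).1 h3) i
    simpa [Matrix.mul_apply, dotProduct, Matrix.mulVec] using this
  have hr := diag_rel X K hK hp hX
  have hv : (fun i => sg i * K i i) ᵥ* M4 X = 0 := by
    ext k
    simpa [Matrix.vecMul, dotProduct, M4] using hr (m4 k).1 (m4 k).2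
  have hz := Matrix.eq_zero_of_vecMul_eq_zero h hv
  rw [← hK.trace_eq_zero_iff]
  apply Finset.sum_eq_zero
  intro i _
  have := congrFun hz i
  simpa [sg_sq] using this

lemma ae4 : ∀ᵐ X : Fin 10 → Fin 4 → ℝ ∂volume, (M4 X).det ≠ 0 := by
  have hcont : Continuous fun X => (M4 X).det := by
    apply Continuous.matrix_det
    unfold M4
    fun_prop
  have hopen : IsOpen {X : Fin 10 → Fin 4 → ℝ | (M4 X).det ≠ 0} :=
    isOpen_ne_fun hcont continuous_const
  apply ae_mem_of_ae_add_linearMap_mem (LinearMap.toSpanSingleton ℝ (Fin 10 → Fin 4 → ℝ) V4)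
    volume volume hopen.measurableSet
  intro Y
  -- the polynomial in t
  let P : Polynomial ℝ := (Matrix.of fun i k =>
    (Polynomial.C (Y i (m4 k).1) + Polynomial.X * Polynomial.C (V4 i (m4 k).1)) *
    (Polynomial.C (Y i (m4 k).2) + Polynomial.X * Polynomial.C (V4 i (m4 k).2)) :
      Matrix (Fin 10) (Fin 10) (Polynomial ℝ)).det
  have hP : ∀ t : ℝ, P.eval t = (M4 (Y + t • V4)).det := by
    intro t
    rw [← Polynomial.coe_evalRingHom, RingHom.map_det]
    congr 1
    ext i k
    simp [M4]
    ring
  have hP0 : P ≠ 0 := by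
    intro h0
    have hz : ∀ t : ℝ, (M4 (Y + t • V4)).det = 0 := fun t => by rw [← hP, h0]; simp
    have hz2 : ∀ s : ℝ, s ≠ 0 → (M4 (s • Y + V4)).det = 0 := by
      intro s hs
      have e : M4 (s • Y + V4) = s ^ 2 • M4 (Y + s⁻¹ • V4) := by
        ext i k
        simp [M4]
        field_simp
      rw [e, Matrix.det_smul, hz]; simp
    have hc1 : ∀ V : Fin 10 → Fin 4 → ℝ, Continuous fun s : ℝ => (M4 (s • Y + V)).det :=
      fun V => by
        apply Continuous.matrix_det
        unfold M4
        fun_prop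
    have hc2 := hc1 V4
    have : (fun s : ℝ => (M4 (s • Y + V4)).det) = fun _ => 0 := by
      apply Continuous.ext_on (dense_compl_singleton (0:ℝ)) hc2 continuous_const
      intro s hs
      exact hz2 s hs
    have := congrFun this 0
    simp only [zero_smul, zero_add] at this
    exact M4_V4 this
  have hfin : {t : ℝ | P.IsRoot t}.Finite := Polynomial.finite_setOfPred_isRoot hP0
  filter_upwards [hfin.countable.ae_notMem volume] with t ht
  intro h
  apply ht
  show P.eval t = 0
  rw [hP]
  exact h

lemma core3 (A B : Matrix (Fin 5) (Fin 3) ℝ) (D E : Fin 5 → ℝ) (hD : ∀ i, 0 < D i)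
    (hE : ∀ i, 0 < E i) (hA : Function.Injective A.mulVec)
    (hAB : Aᵀ * Matrix.diagonal D * A = Bᵀ * Matrix.diagonal E * B) :
    ∃ M : Matrix (Fin 5) (Fin 5) ℝ,
      (Matrix.fromBlocks (Matrix.diagonal D) M Mᴴ (Matrix.diagonal E)).PosSemidef ∧
      Matrix.diagonal D * A + M * B = 0 ∧ Mᴴ * A + Matrix.diagonal E * B = 0 := by
  have hDp : (Matrix.diagonal D).PosDef := Matrix.PosDef.diagonal hD
  have hEp : (Matrix.diagonal E).PosDef := Matrix.PosDef.diagonal hE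
  set DD := Matrix.diagonal D with hDD
  set EE := Matrix.diagonal E with hEE
  have hDt : DDᵀ = DD := Matrix.diagonal_transpose _
  have hEt : EEᵀ = EE := Matrix.diagonal_transpose _
  set Q := Aᵀ * DD * A with hQ
  have hQp : Q.PosDef := by
    have := hDp.conjTranspose_mul_mul_same hA
    rwa [Matrix.conjTranspose_eq_transpose_of_trivial] at this
  have hQu : IsUnit Q.det := hQp.det_pos.ne'.isUnit
  have hDu : IsUnit DD.det := hDp.det_pos.ne'.isUnit
  have hQt : Qᵀ = Q := by
    have := hQp.1; rwa [Matrix.IsHermitian, Matrix.conjTranspose_eq_transpose_of_trivial] at this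
  have hMt : (-(DD * A * Q⁻¹ * Bᵀ * EE))ᴴ = -(EE * B * Q⁻¹ * Aᵀ * DD) := by
    rw [Matrix.conjTranspose_eq_transpose_of_trivial]
    simp only [Matrix.transpose_neg, Matrix.transpose_mul, hDt, hEt, Matrix.transpose_transpose,
      Matrix.transpose_nonsing_inv, hQt, Matrix.mul_assoc]
  refine ⟨-(DD * A * Q⁻¹ * Bᵀ * EE), ?_, ?_, ?_⟩
  · have := hDp.isUnit.invertible
    have := hQp.isUnit.invertible
    rw [Matrix.PosDef.fromBlocks₁₁ _ _ hDp, hMt]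
    have e : EE - -(EE * B * Q⁻¹ * Aᵀ * DD) * DD⁻¹ * -(DD * A * Q⁻¹ * Bᵀ * EE)
        = EE - (EE * B) * Q⁻¹ * (EE * B)ᴴ := by
      congr 1
      rw [Matrix.conjTranspose_eq_transpose_of_trivial, Matrix.transpose_mul, hEt]
      simp only [Matrix.neg_mul, Matrix.mul_neg, neg_neg]
      calc EE * B * Q⁻¹ * Aᵀ * DD * DD⁻¹ * (DD * A * Q⁻¹ * Bᵀ * EE)
          = EE * B * Q⁻¹ * Aᵀ * (DD * DD⁻¹) * (DD * A * Q⁻¹ * Bᵀ * EE) := by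
            simp only [Matrix.mul_assoc]
        _ = EE * B * (Q⁻¹ * (Aᵀ * DD * A)) * Q⁻¹ * (Bᵀ * EE) := by
            rw [Matrix.mul_nonsing_inv _ hDu]; simp only [Matrix.mul_assoc, Matrix.one_mul]
        _ = _ := by rw [← hQ, Matrix.nonsing_inv_mul _ hQu]; simp
    rw [e, ← Matrix.PosDef.fromBlocks₂₂ _ _ hQp]
    have h2 := hEp.posSemidef.conjTranspose_mul_mul_same (Matrix.fromCols (1 : Matrix (Fin 5) (Fin 5) ℝ) B)
    have e2 : Matrix.fromBlocks EE (EE * B) (EE * B)ᴴ Q =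
        (Matrix.fromCols (1 : Matrix (Fin 5) (Fin 5) ℝ) B)ᴴ * EE *
          (Matrix.fromCols (1 : Matrix (Fin 5) (Fin 5) ℝ) B) := by
      rw [Matrix.conjTranspose_eq_transpose_of_trivial, Matrix.conjTranspose_eq_transpose_of_trivial,
      Matrix.transpose_fromCols, Matrix.fromRows_mul, Matrix.fromRows_mul_fromCols, hAB]
      simp [hEt]
    rw [e2]
    exact h2
  · have : DD * A * Q⁻¹ * Bᵀ * EE * B = DD * A * (Q⁻¹ * (Bᵀ * EE * B)) := by
      simp only [Matrix.mul_assoc]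
    rw [Matrix.neg_mul, this, ← hAB, Matrix.nonsing_inv_mul _ hQu]; simp
  · have : EE * B * Q⁻¹ * Aᵀ * DD * A = EE * B * (Q⁻¹ * (Aᵀ * DD * A)) := by
      simp only [Matrix.mul_assoc]
    rw [hMt, Matrix.neg_mul, this, ← hQ, Matrix.nonsing_inv_mul _ hQu]; simp

lemma bad_of_weights (X : Fin 10 → Fin 3 → ℝ) (w : Fin 10 → ℝ) (hw : ∀ i, 0 < w i)
    (hT : (Matrix.of fun i p : Fin 3 => X (Fin.castLE (by norm_num) i) p).det ≠ 0)
    (hrel : ∀ p q, ∑ i, sg i * w i * (X i p * X i q) = 0) :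
    ∃ N : Matrix (Fin 10) (Fin 10) ℝ, N.PosSemidef ∧ N ≠ 0 ∧
      (∀ i j, i ≠ j → ¬ K55.Adj i j → N i j = 0) ∧ N * Matrix.of X = 0 := by
  let l : Fin 5 → Fin 10 := Fin.castAdd 5
  let r : Fin 5 → Fin 10 := Fin.natAdd 5
  let A : Matrix (Fin 5) (Fin 3) ℝ := Matrix.of fun i p => X (l i) p
  let B : Matrix (Fin 5) (Fin 3) ℝ := Matrix.of fun i p => X (r i) p
  have hsl : ∀ i, sg (l i) = 1 := fun i => by simp [sg, l]
  have hsr : ∀ i, sg (r i) = -1 := fun i => by simp [sg, r]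
  have hsum : ∀ f : Fin 10 → ℝ, ∑ i, f i = ∑ i, f (l i) + ∑ i, f (r i) := fun f =>
    Fin.sum_univ_add (a := 5) (b := 5) f
  obtain ⟨M, hM, h1, h2⟩ := core3 A B (fun i => w (l i)) (fun i => w (r i)) (fun i => hw _)
    (fun i => hw _) (by
      rw [← Matrix.coe_mulVecLin, injective_iff_map_eq_zero]
      intro v hv
      apply Matrix.eq_zero_of_mulVec_eq_zero hT
      ext i
      exact congrFun hv (Fin.castLE (by norm_num) i)) (by
      ext p q
      have := hrel p q
      rw [hsum] at this
      simp only [hsl, hsr] at this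
      rw [Matrix.mul_apply, Matrix.mul_apply]
      simp only [Matrix.mul_diagonal, Matrix.transpose_apply, A, B, Matrix.of_apply]
      rw [← sub_eq_zero, ← this, sub_eq_add_neg, ← Finset.sum_neg_distrib]
      congr 1 <;> exact Finset.sum_congr rfl fun i _ => by ring)
  let e : Fin 10 ≃ Fin 5 ⊕ Fin 5 := (finSumFinEquiv (m := 5) (n := 5)).symm
  have hel : ∀ i, e (l i) = Sum.inl i := fun i => finSumFinEquiv_symm_apply_castAdd i
  have her : ∀ i, e (r i) = Sum.inr i := fun i => finSumFinEquiv_symm_apply_natAdd i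
  have hcase : ∀ i : Fin 10, (∃ a, i = l a) ∨ (∃ a, i = r a) := by
    intro i
    rcases h : e i with a | a
    · left; exact ⟨a, e.injective (by rw [h, hel])⟩
    · right; exact ⟨a, e.injective (by rw [h, her])⟩
  refine ⟨(Matrix.fromBlocks (Matrix.diagonal fun i => w (l i)) M Mᴴ
    (Matrix.diagonal fun i => w (r i))).submatrix e e, hM.submatrix e, ?_, ?_, ?_⟩
  · intro h
    have := congrFun (congrFun h (l 0)) (l 0)
    simp [hel] at this
    exact (hw _).ne' this
  · intro i j hij hadj
    rcases hcase i with ⟨a, rfl⟩ | ⟨a, rfl⟩ <;> rcases hcase j with ⟨b, rfl⟩ | ⟨b, rfl⟩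
    · have : a ≠ b := fun h => hij (by rw [h])
      simp [hel, this]
    · exfalso; apply hadj
      simp only [K55, SimpleGraph.fromRel_adj]
      exact ⟨hij, Or.inl ⟨by simp [l], by simp [r]⟩⟩
    · exfalso; apply hadj
      simp only [K55, SimpleGraph.fromRel_adj]
      exact ⟨hij, Or.inr ⟨by simp [l], by simp [r]⟩⟩
    · have : a ≠ b := fun h => hij (by rw [h])
      simp [her, this]
  · ext i p
    rw [Matrix.mul_apply, hsum]
    rcases hcase i with ⟨a, rfl⟩ | ⟨a, rfl⟩
    · have := congrFun (congrFun h1 a) p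
      rw [Matrix.add_apply, Matrix.mul_apply, Matrix.mul_apply] at this
      simp only [Matrix.submatrix_apply, hel, her, Matrix.fromBlocks_apply₁₁,
        Matrix.fromBlocks_apply₁₂]
      exact this
    · have := congrFun (congrFun h2 a) p
      rw [Matrix.add_apply, Matrix.mul_apply, Matrix.mul_apply] at this
      simp only [Matrix.submatrix_apply, hel, her, Matrix.fromBlocks_apply₂₁,
        Matrix.fromBlocks_apply₂₂]
      exact this

/-- monomials in three variables -/
def m3 : Fin 6 → Fin 3 × Fin 3 := ![(0,0),(1,1),(2,2),(0,1),(0,2),(1,2)]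

def V3 : Fin 10 → Fin 3 → ℝ :=
  ![![1,0,0],![0,1,0],![0,0,1],![1,1,0],![1,0,1],![0,1,1],![1,2,0],![1,0,2],![0,1,-1],![3,0,0]]

def a6 : Fin 6 → Fin 10 := ![0,1,2,3,4,5]
def s6 : Fin 6 → ℝ := ![1,1,1,1,1,-1]
def b4 : Fin 4 → Fin 10 := ![6,7,8,9]

def M3 (X : Fin 10 → Fin 3 → ℝ) : Matrix (Fin 6) (Fin 6) ℝ :=
  Matrix.of fun k i => s6 i * (X (a6 i) (m3 k).1 * X (a6 i) (m3 k).2)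

def v3 (X : Fin 10 → Fin 3 → ℝ) : Fin 6 → ℝ :=
  fun k => ∑ j, X (b4 j) (m3 k).1 * X (b4 j) (m3 k).2

def c3 (X : Fin 10 → Fin 3 → ℝ) : Fin 6 → ℝ := (M3 X)⁻¹ *ᵥ v3 X

lemma M3_V3 : (M3 V3).det ≠ 0 := by
  rw [Matrix.det_of_isUpperTriangular]
  · rw [Finset.prod_ne_zero_iff]
    intro i _
    fin_cases i <;> simp [M3, V3, m3, a6, s6]
  · intro i j hij
    fin_cases i <;> fin_cases j <;> first | (exfalso; revert hij; decide) | simp [M3, V3, m3, a6, s6]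

lemma c3_V3 : c3 V3 = ![7,4,4,2,2,1] := by
  have : v3 V3 = M3 V3 *ᵥ ![7,4,4,2,2,1] := by
    ext k
    simp only [v3, Matrix.mulVec, dotProduct, Fin.sum_univ_succ, M3]
    fin_cases k <;> simp [V3, m3, a6, b4, s6] <;> norm_num
  rw [c3, this, Matrix.mulVec_mulVec, Matrix.nonsing_inv_mul _ M3_V3.isUnit, Matrix.one_mulVec]

lemma bad3 : ∀ᶠ X in nhds V3, ∃ N : Matrix (Fin 10) (Fin 10) ℝ, N.PosSemidef ∧ N ≠ 0 ∧
      (∀ i j, i ≠ j → ¬ K55.Adj i j → N i j = 0) ∧ N * Matrix.of X = 0 := by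
  have hM : Continuous M3 := by unfold M3; fun_prop
  have hv : Continuous v3 := by unfold v3; fun_prop
  have hdet : ContinuousAt (fun X => (M3 X).det) V3 := hM.matrix_det.continuousAt
  have hc : ContinuousAt c3 V3 := by
    have : c3 = fun X => ((M3 X).det)⁻¹ • ((M3 X).adjugate *ᵥ v3 X) := by
      funext X
      rw [c3, Matrix.inv_def, Ring.inverse_eq_inv', Matrix.smul_mulVec]
    rw [this]
    exact (hdet.inv₀ M3_V3).smul (hM.matrix_adjugate.matrix_mulVec hv).continuousAt
  have h1 : ∀ᶠ X in nhds V3, (M3 X).det ≠ 0 := hdet.eventually_ne M3_V3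
  have h2 : ∀ᶠ X in nhds V3, ∀ i, 0 < c3 X i := by
    rw [Filter.eventually_all]
    intro i
    have hci : ContinuousAt (fun X => c3 X i) V3 := (continuous_apply i).continuousAt.comp hc
    apply hci.eventually (lt_mem_nhds _)
    show 0 < c3 V3 i
    rw [c3_V3]
    fin_cases i <;> simp
  have h3 : ∀ᶠ X : Fin 10 → Fin 3 → ℝ in nhds V3,
      (Matrix.of fun i p : Fin 3 => X (Fin.castLE (by norm_num) i) p).det ≠ 0 := by
    have hT : Continuous fun X : Fin 10 → Fin 3 → ℝ =>
        (Matrix.of fun i p : Fin 3 => X (Fin.castLE (by norm_num) i) p).det := by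
      apply Continuous.matrix_det
      fun_prop
    apply hT.continuousAt.eventually_ne
    have : (Matrix.of fun i p : Fin 3 => V3 (Fin.castLE (by norm_num) i) p) = 1 := by
      ext i p
      fin_cases i <;> fin_cases p <;> simp [V3]
    rw [this]; simp
  filter_upwards [h1, h2, h3] with X g1 g2 g3
  have hrel : M3 X *ᵥ c3 X = v3 X := by
    rw [c3, Matrix.mulVec_mulVec, Matrix.mul_nonsing_inv _ g1.isUnit, Matrix.one_mulVec]
  refine bad_of_weights X ![c3 X 0, c3 X 1, c3 X 2, c3 X 3, c3 X 4, c3 X 5, 1, 1, 1, 1] ?_ g3 ?_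
  · intro i
    fin_cases i <;> first | exact g2 _ | exact one_pos
  · have main : ∀ k, ∑ i, sg i * (![c3 X 0, c3 X 1, c3 X 2, c3 X 3, c3 X 4, c3 X 5, 1, 1, 1, 1]
        : Fin 10 → ℝ) i * (X i (m3 k).1 * X i (m3 k).2) = 0 := by
      intro k
      have := congrFun hrel k
      simp [Matrix.mulVec, dotProduct, M3, v3, Fin.sum_univ_succ, a6, b4, s6] at this
      simp [Fin.sum_univ_succ, sg] 
      linarith
    intro p q
    have hk : ∃ k, m3 k = (p, q) ∨ m3 k = (q, p) := by
      revert p q; decide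
    obtain ⟨k, hk | hk⟩ := hk
    · have := main k
      rw [hk] at this
      exact this
    · have := main k
      rw [hk] at this
      simpa only [mul_comm (X _ q)] using this

lemma bad_d (d : ℕ) (hd : d ≤ 3) : ¬ ∀ᵐ X : Fin 10 → Fin d → ℝ ∂volume,
      ∃ K ∈ graphModel 10 K55, ∀ K' ∈ graphModel 10 K55,
        mlObjective (Matrix.of X * (Matrix.of X)ᵀ) K ≤
          mlObjective (Matrix.of X * (Matrix.of X)ᵀ) K' := by
  intro h
  let φ : (Fin 10 → Fin d → ℝ) → (Fin 10 → Fin 3 → ℝ) := fun X i j =>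
    if hj : j.val < d then X i ⟨j, hj⟩ else V3 i j
  let X0 : Fin 10 → Fin d → ℝ := fun i j => V3 i (Fin.castLE hd j)
  have hφ : Continuous φ := by
    refine continuous_pi fun i => continuous_pi fun j => ?_
    by_cases hj : j.val < d
    · simp only [φ, hj, dite_true]; fun_prop
    · simp only [φ, hj, dite_false]; fun_prop
  have hφ0 : φ X0 = V3 := by
    funext i j
    by_cases hj : j.val < d <;> simp [φ, hj, X0]
  have hb := (hφ.continuousAt (x := X0)).eventually (by rw [hφ0]; exact bad3)
  have hpos := Measure.measure_pos_of_mem_nhds (volume : Measure (Fin 10 → Fin d → ℝ)) hb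
  apply hpos.ne'
  refine measure_mono_null ?_ h
  rintro X ⟨N, hN, h0, hp, hX⟩
  refine no_min K55 X N hN h0 hp ?_
  ext i j
  have := congrFun (congrFun hX i) (Fin.castLE hd j)
  simpa [Matrix.mul_apply, φ] using this

theorem mlt_K55 : mlt 10 (graphModel 10 K55) = 4 := by
  unfold mlt
  apply le_antisymm
  · apply Nat.sInf_le
    refine ⟨by norm_num, ?_⟩
    filter_upwards [ae4] with X hX
    exact good4 X hX
  · apply le_csInf
    · refine ⟨4, by norm_num, ?_⟩
      filter_upwards [ae4] with X hX
      exact good4 X hX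
    · rintro d ⟨_, hd⟩
      by_contra! hlt
      exact bad_d d (by omega) hd
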